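/- One has φ03∧(Θ02 + (1/2)·Ω∧Ω)∧Ω = 0, where Ω = φ11 + θs. (This expresses that the invariant curvature-measure form Λ_{2,3} = φ_{0,3}∧[Θ_{0,2} + (1/2)(dα)²] on the sphere bundle of ℍ² is primitive, i.e. Λ_{2,3}∧dα = 0, since the restriction of dα to the contact plane is −Ω.) -/

import Mathlib

/-!
Products of two 1-forms are central, so all identities between 2-forms can be checked in a
commutative ring. The form `φ = γ₁ ∧ ⋯ ∧ γₙ` annihilates `f = ∑ βᵢ ∧ γᵢ`, because every summand
repeats a factor of `φ`. With `s = ∑ yₘ ∧ xₘ` and `Ω = f - s`, so that `Ω` agrees with `-s` modulo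
`f`, it therefore suffices to show `(2Θ + s²) ∧ s = 0`.

Let `V z = z₁ ∧ z₂ ∧ z₃ ∧ z₄`. Expanding `V (x + t • y)` in powers of `t`, the `t²` coefficient is
`-(Θ + s² / 2)`; comparing `t = 1`, `t = -1` and the extreme coefficients `V x`, `V y` gives
`2Θ + s² = 2 V x + 2 V y - V (x + y) - V (x - y)`. Now `yₘ ∧ yₘ = 0` implies
`s = ∑ yₘ ∧ (xₘ + t • yₘ)`, so `s` is annihilated by each `V (x + t • y)`, and likewise by `V y`.
-/

noncomputable section

open ExteriorAlgebra

/-- Basis 1-forms of the dual of `ℝ^14`, modelled as generators of the exterior algebra of a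
14-dimensional real vector space. -/
def e14 (i : Fin 14) : ExteriorAlgebra ℝ (Fin 14 → ℝ) :=
  ExteriorAlgebra.ι ℝ (Pi.single i 1)

def βi : ExteriorAlgebra ℝ (Fin 14 → ℝ) := e14 0
def βj : ExteriorAlgebra ℝ (Fin 14 → ℝ) := e14 1
def βk : ExteriorAlgebra ℝ (Fin 14 → ℝ) := e14 2
def γi : ExteriorAlgebra ℝ (Fin 14 → ℝ) := e14 3
def γj : ExteriorAlgebra ℝ (Fin 14 → ℝ) := e14 4
def γk : ExteriorAlgebra ℝ (Fin 14 → ℝ) := e14 5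
def dx1 : ExteriorAlgebra ℝ (Fin 14 → ℝ) := e14 6
def dx2 : ExteriorAlgebra ℝ (Fin 14 → ℝ) := e14 7
def dx3 : ExteriorAlgebra ℝ (Fin 14 → ℝ) := e14 8
def dx4 : ExteriorAlgebra ℝ (Fin 14 → ℝ) := e14 9
def dy1 : ExteriorAlgebra ℝ (Fin 14 → ℝ) := e14 10
def dy2 : ExteriorAlgebra ℝ (Fin 14 → ℝ) := e14 11
def dy3 : ExteriorAlgebra ℝ (Fin 14 → ℝ) := e14 12
def dy4 : ExteriorAlgebra ℝ (Fin 14 → ℝ) := e14 13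

def θ0i : ExteriorAlgebra ℝ (Fin 14 → ℝ) := dy1 * dy2 - dy3 * dy4
def θ0j : ExteriorAlgebra ℝ (Fin 14 → ℝ) := dy1 * dy3 + dy2 * dy4
def θ0k : ExteriorAlgebra ℝ (Fin 14 → ℝ) := dy1 * dy4 - dy2 * dy3
def θ2i : ExteriorAlgebra ℝ (Fin 14 → ℝ) := dx1 * dx2 - dx3 * dx4
def θ2j : ExteriorAlgebra ℝ (Fin 14 → ℝ) := dx1 * dx3 + dx2 * dx4
def θ2k : ExteriorAlgebra ℝ (Fin 14 → ℝ) := dx1 * dx4 - dx2 * dx3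
def θs : ExteriorAlgebra ℝ (Fin 14 → ℝ) := -(dy1 * dx1 + dy2 * dx2 + dy3 * dx3 + dy4 * dx4)

def Θ02 : ExteriorAlgebra ℝ (Fin 14 → ℝ) := θ0i * θ2i + θ0j * θ2j + θ0k * θ2k
def φ03 : ExteriorAlgebra ℝ (Fin 14 → ℝ) := γi * γj * γk
def φ11 : ExteriorAlgebra ℝ (Fin 14 → ℝ) := βi * γi + βj * γj + βk * γk
def Ω : ExteriorAlgebra ℝ (Fin 14 → ℝ) := φ11 + θs

section General

variable (R : Type*) {M : Type*} [CommRing R] [AddCommGroup M] [Module R M]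

lemma ι_mul_ι_swap (u v : M) : ι R u * ι R v = -(ι R v * ι R u) :=
  eq_neg_of_add_eq_zero_left (ι_add_mul_swap u v)

lemma ι_mul_ι_mem_center (u v : M) :
    ι R u * ι R v ∈ Subalgebra.center R (ExteriorAlgebra R M) := by
  refine Subalgebra.mem_center_iff.2 fun z ↦ ?_
  change Commute z (ι R u * ι R v)
  induction z using ExteriorAlgebra.induction with
  | algebraMap r => exact Algebra.commutes r _
  | ι w =>
    calc ι R w * (ι R u * ι R v)
        = -(ι R u * (ι R w * ι R v)) := by rw [← mul_assoc, ι_mul_ι_swap R w u, neg_mul, mul_assoc]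
      _ = ι R u * ι R v * ι R w := by rw [ι_mul_ι_swap R w v, mul_neg, neg_neg, mul_assoc]
  | mul a b ha hb => exact ha.mul_left hb
  | add a b ha hb => exact ha.add_left hb

/-- The algebra of central forms. It contains all 2-forms, which can thus be manipulated in a
commutative ring. -/
abbrev CentralForm (R M : Type*) [CommRing R] [AddCommGroup M] [Module R M] :=
  Subalgebra.center R (ExteriorAlgebra R M)

-- Mathlib's instance is inherited from `Subring.center`; `rw` and `ring` do not see that its
-- operations agree with those of `Subalgebra.toRing`.
local instance : CommRing (CentralForm R M) where
  mul_comm := mul_comm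

/-- The wedge product of two 1-forms, as a bilinear map into the central forms. -/
def wedge : M →ₗ[R] M →ₗ[R] CentralForm R M :=
  LinearMap.mk₂ R (fun u v ↦ ⟨ι R u * ι R v, ι_mul_ι_mem_center R u v⟩)
    (fun _ _ _ ↦ Subtype.ext <| by simp [add_mul])
    (fun _ _ _ ↦ Subtype.ext <| by simp)
    (fun _ _ _ ↦ Subtype.ext <| by simp [mul_add])
    (fun _ _ _ ↦ Subtype.ext <| by simp)

lemma coe_wedge (u v : M) : (wedge R u v : ExteriorAlgebra R M) = ι R u * ι R v := rfl

lemma wedge_self (u : M) : wedge R u u = 0 := Subtype.ext (ι_sq_zero u)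

lemma wedge_swap (u v : M) : wedge R u v = -wedge R v u :=
  Subtype.ext (ι_mul_ι_swap R u v)

lemma wedge_mul_wedge_swap_inner (a b c d : M) :
    wedge R a b * wedge R c d = -(wedge R a c * wedge R b d) := by
  apply Subtype.ext
  calc ι R a * ι R b * (ι R c * ι R d)
      = ι R a * (ι R b * ι R c) * ι R d := by simp only [mul_assoc]
    _ = ι R a * -(ι R c * ι R b) * ι R d := by rw [ι_mul_ι_swap R b c]
    _ = -(ι R a * ι R c * (ι R b * ι R d)) := by simp only [mul_neg, neg_mul, mul_assoc]

/-- The 2-form `∑ m, u m ∧ v m` of two families of 1-forms; both `φ11` and `-θs` have this shape. -/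
def pairing {I : Type*} [Fintype I] (u v : I → M) : CentralForm R M :=
  ∑ m, wedge R (u m) (v m)

lemma pairing_swap {I : Type*} [Fintype I] (u v : I → M) : pairing R u v = -pairing R v u := by
  simp only [pairing, wedge_swap R (u _) (v _), Finset.sum_neg_distrib]

lemma pairing_add_smul {I : Type*} [Fintype I] (u v : I → M) (t : R) :
    pairing R u (v + t • u) = pairing R u v := by
  simp [pairing, wedge_self]

lemma pairing_sq {I : Type*} [Fintype I] (u v : I → M) :
    pairing R u v ^ 2 = -∑ p, ∑ q, wedge R (u p) (u q) * wedge R (v p) (v q) := by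
  simp only [pairing, sq, Finset.sum_mul_sum, wedge_mul_wedge_swap_inner R (u _) (v _),
    Finset.sum_neg_distrib]

lemma ιMulti_mul_pairing {n : ℕ} (u v : Fin n → M) :
    ιMulti R n v * (pairing R u v : ExteriorAlgebra R M) = 0 := by
  rw [Subalgebra.mem_center_iff.1 (pairing R u v).2, pairing, AddSubmonoidClass.coe_finsetSum,
    Finset.sum_mul]
  refine Finset.sum_eq_zero fun i _ ↦ ?_
  rw [coe_wedge, mul_assoc, ιMulti_apply, ι_mul_prod_list, mul_zero]

/-- The 4-form `z 0 ∧ z 1 ∧ z 2 ∧ z 3`, as an element of the centre. -/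
def volumeForm (z : Fin 4 → M) : CentralForm R M :=
  wedge R (z 0) (z 1) * wedge R (z 2) (z 3)

lemma coe_volumeForm (z : Fin 4 → M) : (volumeForm R z : ExteriorAlgebra R M) = ιMulti R 4 z := by
  simp [volumeForm, coe_wedge, ιMulti_apply, Matrix.vecTail, mul_assoc]

lemma volumeForm_mul_pairing (u z : Fin 4 → M) : volumeForm R z * pairing R u z = 0 :=
  Subtype.ext <| by
    rw [MulMemClass.coe_mul, coe_volumeForm, ιMulti_mul_pairing, ZeroMemClass.coe_zero]

lemma volumeForm_add_smul_mul_pairing (y x : Fin 4 → M) (t : R) :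
    volumeForm R (x + t • y) * pairing R y x = 0 := by
  rw [← pairing_add_smul R y x t, volumeForm_mul_pairing]

/-- The three anti-self-dual 2-forms built from a coframe `z`; at `z = dy` and `z = dx` they are
`θ0i, θ0j, θ0k` and `θ2i, θ2j, θ2k`. -/
def antiSelfDual (z : Fin 4 → M) : Fin 3 → CentralForm R M :=
  ![wedge R (z 0) (z 1) - wedge R (z 2) (z 3),
    wedge R (z 0) (z 2) + wedge R (z 1) (z 3),
    wedge R (z 0) (z 3) - wedge R (z 1) (z 2)]

/-- The 4-form contracting the anti-self-dual 2-forms of two coframes, which is `Θ02` for the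
coframes `dy` and `dx`. -/
def asdContraction (y x : Fin 4 → M) : CentralForm R M :=
  ∑ a, antiSelfDual R y a * antiSelfDual R x a

lemma volumeForm_add_add_volumeForm_sub (y x : Fin 4 → M) :
    volumeForm R (x + y) + volumeForm R (x - y) = 2 * (volumeForm R x + volumeForm R y
      + wedge R (x 0) (x 1) * wedge R (y 2) (y 3) + wedge R (y 0) (y 1) * wedge R (x 2) (x 3)
      - wedge R (y 0) (y 2) * wedge R (x 1) (x 3) - wedge R (y 1) (y 3) * wedge R (x 0) (x 2)
      + wedge R (y 0) (y 3) * wedge R (x 1) (x 2) + wedge R (y 1) (y 2) * wedge R (x 0) (x 3)) := by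
  have h13 : wedge R (y 0) (x 1) * wedge R (y 2) (x 3)
      = -(wedge R (y 0) (y 2) * wedge R (x 1) (x 3)) := wedge_mul_wedge_swap_inner R _ _ _ _
  have h02 : wedge R (x 0) (y 1) * wedge R (x 2) (y 3)
      = -(wedge R (y 1) (y 3) * wedge R (x 0) (x 2)) := by
    rw [wedge_mul_wedge_swap_inner, mul_comm]
  have h12 : wedge R (y 0) (x 1) * wedge R (x 2) (y 3)
      = wedge R (y 0) (y 3) * wedge R (x 1) (x 2) := by
    rw [wedge_swap R (x 2), mul_neg, wedge_mul_wedge_swap_inner, neg_neg]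
  have h03 : wedge R (x 0) (y 1) * wedge R (y 2) (x 3)
      = wedge R (y 1) (y 2) * wedge R (x 0) (x 3) := by
    rw [wedge_swap R (x 0), neg_mul, wedge_mul_wedge_swap_inner, neg_neg]
  simp only [volumeForm, Pi.add_apply, Pi.sub_apply, map_add, map_sub, LinearMap.add_apply,
    LinearMap.sub_apply]
  linear_combination 2 * (h13 + h02 + h12 + h03)

lemma two_nsmul_asdContraction_add_pairing_sq (y x : Fin 4 → M) :
    2 • asdContraction R y x + pairing R y x ^ 2 =
      2 * volumeForm R x + 2 * volumeForm R y - (volumeForm R (x + y) + volumeForm R (x - y)) := by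
  have h_symm (p q : Fin 4) : wedge R (y q) (y p) * wedge R (x q) (x p)
      = wedge R (y p) (y q) * wedge R (x p) (x q) := by
    rw [wedge_swap R (y q), wedge_swap R (x q), neg_mul_neg]
  rw [pairing_sq, volumeForm_add_add_volumeForm_sub]
  simp only [asdContraction, antiSelfDual, Fin.sum_univ_three, Fin.sum_univ_four, wedge_self,
    Matrix.cons_val]
  linear_combination -(h_symm 0 1 + h_symm 0 2 + h_symm 0 3 + h_symm 1 2 + h_symm 1 3 + h_symm 2 3)

lemma two_nsmul_asdContraction_add_pairing_sq_mul_pairing (y x : Fin 4 → M) :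
    (2 • asdContraction R y x + pairing R y x ^ 2) * pairing R y x = 0 := by
  have hx : volumeForm R x * pairing R y x = 0 := volumeForm_mul_pairing R y x
  have hy : volumeForm R y * pairing R y x = 0 := by
    rw [pairing_swap, mul_neg, volumeForm_mul_pairing, neg_zero]
  have hadd : volumeForm R (x + y) * pairing R y x = 0 := by
    simpa using volumeForm_add_smul_mul_pairing R y x 1
  have hsub : volumeForm R (x - y) * pairing R y x = 0 := by
    simpa [← sub_eq_add_neg] using volumeForm_add_smul_mul_pairing R y x (-1)
  rw [two_nsmul_asdContraction_add_pairing_sq]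
  linear_combination 2 * hx + 2 * hy - hadd - hsub

/-- The 2-form `Ω`, that is, `-dα` restricted to the contact plane, for arbitrary families of
1-forms. -/
def symplecticForm {I J : Type*} [Fintype I] [Fintype J] (β γ : I → M) (y x : J → M) :
    CentralForm R M :=
  pairing R β γ - pairing R y x

theorem Lambda23_primitive_general {n : ℕ} (β γ : Fin n → M) (y x : Fin 4 → M) :
    ιMulti R n γ * (2 • asdContraction R y x + symplecticForm R β γ y x ^ 2) *
      symplecticForm R β γ y x = 0 := by
  obtain ⟨c, hc⟩ : pairing R β γ ∣
      (2 • asdContraction R y x + symplecticForm R β γ y x ^ 2) * symplecticForm R β γ y x := by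
    refine ⟨2 • asdContraction R y x + symplecticForm R β γ y x ^ 2
      + (pairing R β γ - 2 * pairing R y x) * -pairing R y x, ?_⟩
    rw [symplecticForm]
    linear_combination -two_nsmul_asdContraction_add_pairing_sq_mul_pairing R y x
  rw [mul_assoc]
  norm_cast
  rw [hc, MulMemClass.coe_mul, ← mul_assoc, ιMulti_mul_pairing, zero_mul]

end General

/-- The standard basis covector of index `i`, so that `e14 i = ι ℝ (covector i)`. -/
def covector (i : Fin 14) : Fin 14 → ℝ := Pi.single i 1

/-- The family of covectors underlying `βi, βj, βk`. -/
def β : Fin 3 → Fin 14 → ℝ := ![covector 0, covector 1, covector 2]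

/-- The family of covectors underlying `γi, γj, γk`. -/
def γ : Fin 3 → Fin 14 → ℝ := ![covector 3, covector 4, covector 5]

/-- The family of covectors underlying `dx1, dx2, dx3, dx4`. -/
def dx : Fin 4 → Fin 14 → ℝ := ![covector 6, covector 7, covector 8, covector 9]

/-- The family of covectors underlying `dy1, dy2, dy3, dy4`. -/
def dy : Fin 4 → Fin 14 → ℝ := ![covector 10, covector 11, covector 12, covector 13]

lemma φ03_eq_ιMulti : φ03 = ιMulti ℝ 3 γ := by
  simp [ιMulti_apply, φ03, γ, γi, γj, γk, e14, covector, mul_assoc]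

lemma Θ02_eq_asdContraction : Θ02 = asdContraction ℝ dy dx := by
  simp only [asdContraction, Fin.sum_univ_three]
  rfl

lemma Ω_eq_symplecticForm : Ω = symplecticForm ℝ β γ dy dx := by
  simp only [symplecticForm, pairing, Fin.sum_univ_three, Fin.sum_univ_four, Ω, θs,
    ← sub_eq_add_neg]
  rfl

theorem Lambda23_primitive :
    φ03 * (Θ02 + (1 / 2 : ℝ) • (Ω * Ω)) * Ω = 0 := by
  have hhalf : Θ02 + (1 / 2 : ℝ) • (Ω * Ω) = (1 / 2 : ℝ) • (2 • Θ02 + Ω ^ 2) := by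
    rw [sq]; module
  rw [hhalf, mul_smul_comm, smul_mul_assoc, φ03_eq_ιMulti, Θ02_eq_asdContraction,
    Ω_eq_symplecticForm, Lambda23_primitive_general, smul_zero]

end
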